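/- Let Q ⊆ {0,…,n−1} be a defining set, C the cyclic code with defining set Q, d its minimum distance, and t = ⌊(d−1)/2⌋; assume w ≤ t. Let e ∈ F_2^n be a binary word of weight at most t. Then e has weight exactly w if and only if p(S_{Q,e}) = 0 for every polynomial p ∈ I^∞_{N,w} ∩ F_2[S_Q]. -/

import Mathlib

/-!
The points of the variety of `I_σ + I_S` over `K` with `Δ ≠ 0` are known explicitly. Comparing the
equations for `S_i` and `S_{i+n}`, `1 ≤ i ≤ w`, gives `∑ⱼ Zⱼ^i (Zⱼ^n - 1) = 0`; the `Zⱼ` being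
distinct and nonzero, the Vandermonde determinant forces `Zⱼ^n = 1`
(`locators_of_mem_zeroLocus`). So the `Zⱼ` are the locators of a binary word of weight `w`, and the
`S_i` are its Fourier coefficients; conversely each binary word of weight `w` gives such a point
(`exists_locators`, `mem_zeroLocus_of_locators`). The forward implication follows by evaluating
`Δ^k p ∈ I_σ + I_S` at the point given by `e`.

For the backward implication, let `m_Z` be the ideal of polynomials over `F₂` in the variables
`S_i`, `i ∈ Q`, that vanish at the syndromes with locators `Z`, and let `m_e` be the same for `e`.
There are finitely many locator tuples `Z`. By the Nullstellensatz, if `p` lies in every `m_Z` then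
`Δ p` lies in the radical of `I_σ + I_S`, so a power of `p` lies in the saturation and vanishes at
the syndromes of `e`; hence `⋂ m_Z ⊆ m_e`. As `m_e` is prime, `m_Z ⊆ m_e` for one `Z`. The
syndromes of `e` are then the image of those of `Z` under an `F₂`-endomorphism `g` of `K`
(`exists_algHom_of_vanishing`), that is, the syndromes of the locators `g ∘ Z`. These belong to a
binary word `e'` of weight `w` (`exists_word`), and `e - e'` is a codeword of weight at most
`2t < d`, so `e = e'`.
-/

open MvPolynomial

noncomputable section

abbrev F2 : Type := ZMod 2

/-- `K` is an algebraic closure of `F₂`. -/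
abbrev K : Type := AlgebraicClosure F2

/-- The Fourier transform of a word `e ∈ Kⁿ`: `S_i(e) = ∑_j e_j α^(i·j)`. -/
def ft {n : ℕ} [NeZero n] (α : K) (e : ZMod n → K) (i : ZMod n) : K :=
  ∑ j : ZMod n, e j * α ^ (i.val * j.val)

/-- A word is binary if all its coordinates lie in the prime subfield `F₂ ⊆ K`,
i.e. each coordinate is `0` or `1`. -/
def isBinary {n : ℕ} (e : ZMod n → K) : Prop := ∀ j, e j = 0 ∨ e j = 1

/-- The (Hamming) weight of a word: the number of its nonzero coordinates. -/
def wt {n : ℕ} (e : ZMod n → K) : ℕ := Set.ncard {j | e j ≠ 0}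

/-- Variables of `R' = F₂[σ₁,…,σ_w, S₀,…,S_{n−1}, Z₁,…,Z_w]`:
`Sum.inl i` is `σ_{i+1}`, `Sum.inr (Sum.inl i)` is `S_i`, `Sum.inr (Sum.inr j)` is `Z_{j+1}`. -/
abbrev Vars' (n w : ℕ) : Type := Fin w ⊕ (ZMod n ⊕ Fin w)

/-- The embedding of the variables of `R = F₂[σ, S]` into the variables of `R'`. -/
def emb (n w : ℕ) : (Fin w ⊕ ZMod n) → Vars' n w := Sum.map id Sum.inl

/-- The ideal `I_σ` of `R'`, generated by `σ_i − e_i(Z₁,…,Z_w)` for `1 ≤ i ≤ w`,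
where `e_i` is the `i`-th elementary symmetric polynomial. -/
def Isig (n w : ℕ) : Ideal (MvPolynomial (Vars' n w) F2) :=
  Ideal.span (Set.range fun i : Fin w =>
    X (Sum.inl i) -
      rename (fun j : Fin w => Sum.inr (Sum.inr j)) (esymm (Fin w) F2 ((i : ℕ) + 1)))

/-- The ideal `I_S` of `R'`, generated by `S_{i mod n} − ∑_{j=1}^w Z_j^i`
for `1 ≤ i ≤ n + w` (indices of the `S` variables read modulo `n`). -/
def IS (n w : ℕ) : Ideal (MvPolynomial (Vars' n w) F2) :=
  Ideal.span ((fun i : ℕ =>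
      X (Sum.inr (Sum.inl (i : ZMod n))) - ∑ j : Fin w, X (Sum.inr (Sum.inr j)) ^ i)
    '' Set.Icc 1 (n + w))

/-- `Δ = Z₁⋯Z_w · ∏_{1 ≤ i < j ≤ w} (Z_i − Z_j) ∈ R'`. -/
def Delta (n w : ℕ) : MvPolynomial (Vars' n w) F2 :=
  (∏ j : Fin w, X (Sum.inr (Sum.inr j))) *
    ∏ p ∈ Finset.univ.filter (fun p : Fin w × Fin w => p.1 < p.2),
      (X (Sum.inr (Sum.inr p.1)) - X (Sum.inr (Sum.inr p.2)))

end

/-! ### Conjugate points -/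

/-- If every polynomial over `F₂` vanishing at `x` vanishes at `y`, then `y` is a conjugate of `x`:
the map `F₂[x] → F₂[y]` sending `x` to `y` is well defined, `F₂[x]` is a field, and the map extends
to `K`. -/
lemma exists_algHom_of_vanishing {σ : Type*} (x y : σ → K)
    (h : ∀ p : MvPolynomial σ F2, aeval x p = 0 → aeval y p = 0) :
    ∃ g : K →ₐ[F2] K, ∀ i, g (x i) = y i := by
  let f : MvPolynomial σ F2 →ₐ[F2] K := aeval x
  let h₀ : (MvPolynomial σ F2 ⧸ RingHom.ker f) →ₐ[F2] K :=
    Ideal.Quotient.liftₐ _ (aeval y) (fun p hp => h p hp)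
  let h₁ : f.range →ₐ[F2] K := h₀.comp (Ideal.quotientKerEquivRange f).symm.toAlgHom
  have hfield : IsField f.range := Subalgebra.isField_of_algebraic f.range
  let L : IntermediateField F2 K := f.range.toIntermediateField' hfield
  let h₂ : L →ₐ[F2] K := h₁
  obtain ⟨g, hg⟩ := IsAlgClosed.surjective_domRestrict_of_isAlgebraic (K := F2) (L := L)
    (M := K) (E := K) h₂
  refine ⟨g, fun i => ?_⟩
  have hmem : x i ∈ f.range := ⟨X i, by simp [f]⟩
  have h1 : g (x i) = h₁ ⟨x i, hmem⟩ := DFunLike.congr_fun hg (⟨x i, hmem⟩ : L)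
  rw [h1]
  have h2 : (⟨x i, hmem⟩ : f.range) =
      Ideal.quotientKerEquivRange f (Ideal.Quotient.mk _ (X i)) := by
    apply Subtype.ext
    change x i = f (X i)
    simp [f]
  rw [h2]
  have h3 : h₁ (Ideal.quotientKerEquivRange f (Ideal.Quotient.mk _ (X i))) =
      h₀ (Ideal.Quotient.mk _ (X i)) := by simp [h₁]
  rw [h3]
  change aeval y (X i) = y i
  exact aeval_X _ _

/-! ### The variety of `I_σ + I_S` away from `Δ = 0` -/

lemma aeval_Delta {n w : ℕ} (x : Vars' n w → K) :
    aeval x (Delta n w) = (∏ j : Fin w, x (Sum.inr (Sum.inr j))) *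
      ∏ p ∈ Finset.univ.filter (fun p : Fin w × Fin w => p.1 < p.2),
        (x (Sum.inr (Sum.inr p.1)) - x (Sum.inr (Sum.inr p.2))) := by
  simp [Delta]

lemma aeval_Delta_ne_zero {n w : ℕ} (x : Vars' n w → K) :
    aeval x (Delta n w) ≠ 0 ↔ (∀ j : Fin w, x (Sum.inr (Sum.inr j)) ≠ 0) ∧
      Function.Injective (fun j : Fin w => x (Sum.inr (Sum.inr j))) := by
  rw [aeval_Delta, mul_ne_zero_iff, Finset.prod_ne_zero_iff, Finset.prod_ne_zero_iff]
  refine and_congr (by simp) ⟨fun h a b hab => ?_, fun h p hp h0 => ?_⟩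
  · by_contra hne
    rcases lt_or_gt_of_ne hne with hlt | hlt
    · exact h (a, b) (by simpa using hlt) (sub_eq_zero.2 hab)
    · exact h (b, a) (by simpa using hlt) (sub_eq_zero.2 hab.symm)
  · have h1 := h (sub_eq_zero.1 h0)
    simp only [Finset.mem_filter] at hp
    exact hp.2.ne h1

lemma mem_zeroLocus_iff_eqns {n w : ℕ} (x : Vars' n w → K) :
    x ∈ zeroLocus K (Isig n w + IS n w) ↔
      (∀ i : Fin w, x (Sum.inl i) =
        aeval (fun j : Fin w => x (Sum.inr (Sum.inr j))) (esymm (Fin w) F2 ((i : ℕ) + 1))) ∧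
      ∀ i ∈ Set.Icc 1 (n + w), x (Sum.inr (Sum.inl (i : ZMod n))) =
        ∑ j : Fin w, x (Sum.inr (Sum.inr j)) ^ i := by
  rw [Isig, IS, Submodule.add_eq_sup, Ideal.span, Ideal.span, ← Submodule.span_union,
    ← Ideal.span, zeroLocus_span, Set.mem_ofPred_eq]
  simp only [Set.mem_union, or_imp, forall_and, Set.forall_mem_range, Set.forall_mem_image,
    map_sub, aeval_X, aeval_rename, map_sum, map_pow, sub_eq_zero, Function.comp_def]

/-- Reducing the exponent modulo `n` does not change the power of an `n`-th root of unity. -/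
lemma pow_val_cast {n : ℕ} {z : K} (hz : z ^ n = 1) (i : ℕ) :
    z ^ (i : ZMod n).val = z ^ i := by
  rw [ZMod.val_natCast]
  conv_rhs => rw [← Nat.mod_add_div i n, pow_add, pow_mul, hz, one_pow, mul_one]

/-- The Vandermonde step: on the variety of `I_σ + I_S` away from `Δ = 0`, the `Zⱼ` are distinct
`n`-th roots of unity, and `S` is given by their power sums. -/
lemma locators_of_mem_zeroLocus {n w : ℕ} [NeZero n] (x : Vars' n w → K)
    (hx : x ∈ zeroLocus K (Isig n w + IS n w)) (hΔ : aeval x (Delta n w) ≠ 0) :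
    Function.Injective (fun j : Fin w => x (Sum.inr (Sum.inr j))) ∧
    (∀ j : Fin w, x (Sum.inr (Sum.inr j)) ^ n = 1) ∧
    ∀ a : ZMod n, x (Sum.inr (Sum.inl a)) = ∑ j : Fin w, x (Sum.inr (Sum.inr j)) ^ a.val := by
  obtain ⟨h0, hinj⟩ := (aeval_Delta_ne_zero x).1 hΔ
  have hS := ((mem_zeroLocus_iff_eqns x).1 hx).2
  have hn : 1 ≤ n := NeZero.one_le
  have hroot : ∀ j : Fin w, x (Sum.inr (Sum.inr j)) ^ n = 1 := by
    have hv := Matrix.eq_zero_of_forall_pow_sum_mul_pow_eq_zero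
      (v := fun j : Fin w => x (Sum.inr (Sum.inr j)) * (x (Sum.inr (Sum.inr j)) ^ n - 1)) hinj
      (fun i => by
        have h1 := hS (i + 1) ⟨by omega, by omega⟩
        have h2 := hS (i + 1 + n) ⟨by omega, by omega⟩
        have hc : ((((i : ℕ) + 1 + n : ℕ)) : ZMod n) = (((i : ℕ) + 1 : ℕ) : ZMod n) := by simp
        rw [hc, h1] at h2
        rw [← sub_eq_zero, ← Finset.sum_sub_distrib] at h2
        rw [← neg_eq_zero, ← Finset.sum_neg_distrib, ← h2]
        exact Finset.sum_congr rfl fun j _ => by ring)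
    intro j
    have := congrFun hv j
    exact sub_eq_zero.1 ((mul_eq_zero.1 this).resolve_left (h0 j))
  refine ⟨hinj, hroot, fun a => ?_⟩
  -- The generators of `I_S` start at exponent `1`, so the class `a = 0` is represented by `n`.
  by_cases ha : a.val = 0
  · have h1 := hS n ⟨hn, by omega⟩
    have ha' : a = 0 := (ZMod.val_eq_zero a).1 ha
    rw [ZMod.natCast_self, ← ha'] at h1
    rw [h1, ha]
    exact Finset.sum_congr rfl fun j _ => by rw [hroot j, pow_zero]
  · have h1 := hS a.val ⟨Nat.one_le_iff_ne_zero.2 ha, by have := ZMod.val_lt a; omega⟩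
    rwa [ZMod.natCast_zmod_val] at h1

/-- Distinct `n`-th roots of unity, together with their elementary symmetric functions and power
sums, form a point of the variety of `I_σ + I_S` with `Δ ≠ 0`. -/
lemma mem_zeroLocus_of_locators {n w : ℕ} [NeZero n] (Z : Fin w → K)
    (hinj : Function.Injective Z) (hroot : ∀ j, Z j ^ n = 1) (S : ZMod n → K)
    (hS : ∀ a, S a = ∑ j, Z j ^ a.val) :
    ∃ x : Vars' n w → K, (∀ a, x (Sum.inr (Sum.inl a)) = S a) ∧
      x ∈ zeroLocus K (Isig n w + IS n w) ∧ aeval x (Delta n w) ≠ 0 := by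
  refine ⟨Sum.elim (fun i => aeval Z (esymm (Fin w) F2 ((i : ℕ) + 1))) (Sum.elim S Z),
    fun a => rfl, ?_, ?_⟩
  · rw [mem_zeroLocus_iff_eqns]
    refine ⟨fun i => rfl, fun i _ => ?_⟩
    simp only [Sum.elim_inr, Sum.elim_inl, hS]
    exact Finset.sum_congr rfl fun j _ => pow_val_cast (hroot j) i
  · rw [aeval_Delta_ne_zero]
    refine ⟨fun j h => ?_, hinj⟩
    have h1 := hroot j
    rw [show Z j = 0 from h, zero_pow (NeZero.ne n)] at h1
    exact zero_ne_one h1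

/-! ### Binary words and their locators -/

lemma ft_sub {n : ℕ} [NeZero n] (α : K) (e e' : ZMod n → K) (i : ZMod n) :
    ft α (e - e') i = ft α e i - ft α e' i := by
  simp [ft, sub_mul, Finset.sum_sub_distrib]

/-- The Fourier transform of a binary word is the power sums of the locators `α^(k j)`, where `k`
enumerates the support of the word. -/
lemma ft_eq_sum_locators {n w : ℕ} [NeZero n] (α : K) (e : ZMod n → K) (he : isBinary e)
    (k : Fin w → ZMod n) (hk : Function.Injective k) (hrange : Set.range k = {j | e j ≠ 0})
    (a : ZMod n) : ft α e a = ∑ j, (α ^ (k j).val) ^ a.val := by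
  classical
  have h1 : ∀ j, e (k j) = 1 := fun j =>
    (he (k j)).resolve_left (hrange.subset ⟨j, rfl⟩ : k j ∈ {j | e j ≠ 0})
  rw [ft, ← Finset.sum_subset (Finset.subset_univ (Finset.univ.image k)),
    Finset.sum_image (fun _ _ _ _ h => hk h)]
  · exact Finset.sum_congr rfl fun j _ => by rw [h1, one_mul, ← pow_mul, mul_comm]
  · intro j _ hj
    have : e j = 0 := by
      by_contra h
      obtain ⟨i, hi⟩ := hrange.superset (show j ∈ {j | e j ≠ 0} from h)
      exact hj (Finset.mem_image.2 ⟨i, Finset.mem_univ _, hi⟩)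
    rw [this, zero_mul]

lemma exists_locators {n w : ℕ} [NeZero n] (α : K) (hα : IsPrimitiveRoot α n)
    (e : ZMod n → K) (he : isBinary e) (hw : wt e = w) :
    ∃ Z : Fin w → K, Function.Injective Z ∧ (∀ j, Z j ^ n = 1) ∧
      ∀ a, ft α e a = ∑ j, Z j ^ a.val := by
  have hcard : Nat.card {j | e j ≠ 0} = w := by rw [Nat.card_coe_set_eq]; exact hw
  let E : Fin w ≃ {j | e j ≠ 0} := (finCongr hcard.symm).trans (Finite.equivFin _).symm
  have hk : Function.Injective fun j => (E j : ZMod n) := Subtype.val_injective.comp E.injective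
  refine ⟨fun j => α ^ (E j : ZMod n).val, fun a b hab => hk ?_, fun j => ?_,
    ft_eq_sum_locators α e he _ hk ?_⟩
  · exact ZMod.val_injective n (hα.pow_inj (ZMod.val_lt _) (ZMod.val_lt _) hab)
  · rw [← pow_mul, mul_comm, pow_mul, hα.pow_eq_one, one_pow]
  · ext j
    exact ⟨fun ⟨i, hi⟩ => hi ▸ (E i).2, fun hj => ⟨E.symm ⟨j, hj⟩, by simp⟩⟩

lemma exists_word {n w : ℕ} [NeZero n] (α : K) (hα : IsPrimitiveRoot α n) (Z : Fin w → K)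
    (hinj : Function.Injective Z) (hroot : ∀ j, Z j ^ n = 1) :
    ∃ e : ZMod n → K, isBinary e ∧ wt e = w ∧ ∀ a, ft α e a = ∑ j, Z j ^ a.val := by
  classical
  choose k hkn hk using fun j => hα.eq_pow_of_pow_eq_one (hroot j)
  have hval : ∀ j, ((k j : ZMod n)).val = k j := fun j => ZMod.val_cast_of_lt (hkn j)
  have hkinj : Function.Injective fun j => (k j : ZMod n) := fun a b hab => hinj <| by
    have h1 : k a = k b := by rw [← hval a, ← hval b]; exact congrArg ZMod.val hab
    rw [← hk a, ← hk b, h1]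
  let e : ZMod n → K := fun i => if i ∈ Set.range (fun j => (k j : ZMod n)) then 1 else 0
  have hbin : isBinary e := fun i => by
    by_cases h : i ∈ Set.range (fun j => (k j : ZMod n))
    · right; simp only [e, if_pos h]
    · left; simp only [e, if_neg h]
  have hsupp : Set.range (fun j => (k j : ZMod n)) = {j | e j ≠ 0} := by
    ext i
    by_cases h : i ∈ Set.range (fun j => (k j : ZMod n))
    · simp only [h, e, Set.mem_ofPred_eq, if_true, ne_eq, one_ne_zero, not_false_eq_true]
    · simp only [h, e, Set.mem_ofPred_eq, if_false, ne_eq, not_true_eq_false]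
  refine ⟨e, hbin, ?_, fun a => ?_⟩
  · rw [wt, ← hsupp, ← Set.image_univ, Set.ncard_image_of_injective _ hkinj, Set.ncard_univ,
      Nat.card_fin]
  · rw [ft_eq_sum_locators α e hbin _ hkinj hsupp]
    exact Finset.sum_congr rfl fun j _ => by rw [hval, hk]

lemma isBinary_sub {n : ℕ} {e e' : ZMod n → K} (he : isBinary e) (he' : isBinary e') :
    isBinary (e - e') := by
  intro j
  -- In characteristic two, `0 - 1 = 1`.
  have hneg : (-1 : K) = 1 := CharTwo.neg_eq 1
  rcases he j with h | h <;> rcases he' j with h' | h' <;> simp [h, h', hneg]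

lemma wt_sub_le {n : ℕ} [NeZero n] (e e' : ZMod n → K) : wt (e - e') ≤ wt e + wt e' := by
  refine (Set.ncard_le_ncard (fun j hj => ?_) (Set.toFinite _)).trans (Set.ncard_union_le _ _)
  by_contra h
  simp only [Set.mem_union, Set.mem_ofPred_eq, not_or, not_not] at h
  exact hj (by simp [h.1, h.2])

/-! ### Zeros of the elimination ideal -/

/-- If every polynomial over `F₂` in the saturation vanishes at `y`, then `y` is a vector of power
sums of `w` distinct `n`-th roots of unity. -/
lemma exists_locators_of_saturation_vanish {n w : ℕ} [NeZero n] (Q : Set (ZMod n)) (y : Q → K)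
    (h : ∀ p : MvPolynomial Q F2,
        (∃ k : ℕ, Delta n w ^ k *
            MvPolynomial.rename (fun j : Q => (Sum.inr (Sum.inl j.1) : Vars' n w)) p
          ∈ Isig n w + IS n w) → MvPolynomial.aeval y p = 0) :
    ∃ Z : Fin w → K, Function.Injective Z ∧ (∀ j, Z j ^ n = 1) ∧
      ∀ a : Q, y a = ∑ j, Z j ^ a.1.val := by
  let W : Set (Fin w → K) := {Z | Function.Injective Z ∧ ∀ j, Z j ^ n = 1}
  have hroots : {z : K | z ^ n = 1}.Finite := by
    refine (Polynomial.nthRootsFinset n (1 : K)).finite_toSet.subset fun z hz => ?_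
    exact (Polynomial.mem_nthRootsFinset (NeZero.pos n) 1).2 hz
  have hW : W.Finite :=
    (Set.Finite.pi' fun _ : Fin w => hroots).subset fun Z hZ j => hZ.2 j
  let s : (Fin w → K) → Q → K := fun Z a => ∑ j, Z j ^ a.1.val
  have hle : hW.toFinset.inf (fun Z => vanishingIdeal F2 {s Z}) ≤ vanishingIdeal F2 {y} := by
    intro p hp
    have hp' : ∀ Z ∈ W, aeval (s Z) p = 0 := fun Z hZ =>
      (mem_vanishingIdeal_singleton_iff _ _).1
        ((Submodule.mem_finsetInf.1 hp) Z (hW.mem_toFinset.2 hZ))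
    let P := MvPolynomial.rename (fun j : Q => (Sum.inr (Sum.inl j.1) : Vars' n w)) p
    have hrad : Delta n w * P ∈ (Isig n w + IS n w).radical := by
      rw [← vanishingIdeal_zeroLocus_eq_radical (K := K), mem_vanishingIdeal_iff]
      intro x hx
      rw [map_mul]
      by_cases hΔ : aeval x (Delta n w) = 0
      · rw [hΔ, zero_mul]
      · obtain ⟨hinj, hroot, hS⟩ := locators_of_mem_zeroLocus x hx hΔ
        have h1 := hp' _ ⟨hinj, hroot⟩
        have h2 : aeval x P = 0 := by
          rw [← h1, aeval_rename]
          congr 2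
          exact funext fun a => hS a.1
        rw [h2, mul_zero]
    obtain ⟨k, hk⟩ := hrad
    rw [mul_pow, ← map_pow] at hk
    have := h (p ^ k) ⟨k, hk⟩
    rw [map_pow] at this
    exact (mem_vanishingIdeal_singleton_iff _ _).2 (eq_zero_of_pow_eq_zero this)
  obtain ⟨Z, hZ, hZle⟩ := (Ideal.IsPrime.inf_le' inferInstance).1 hle
  obtain ⟨hinj, hroot⟩ := hW.mem_toFinset.1 hZ
  obtain ⟨g, hg⟩ := exists_algHom_of_vanishing (s Z) y fun p hp =>
    (mem_vanishingIdeal_singleton_iff _ _).1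
      (hZle ((mem_vanishingIdeal_singleton_iff _ _).2 hp))
  refine ⟨fun j => g (Z j), g.injective.comp hinj, fun j => ?_, fun a => ?_⟩
  · rw [← map_pow, hroot, map_one]
  · rw [← hg a]
    simp [s, map_sum, map_pow]

/-- with `w ≤ t = ⌊(d−1)/2⌋` (where `d` is the minimum distance of the cyclic
code with defining set `Q`), a binary word `e` of weight at most `t` has weight exactly `w`
if and only if every polynomial of `I^∞_{N,w} ∩ F₂[S_Q]` vanishes on the syndromes of `e`.
Membership of `p ∈ F₂[S_Q]` in `I^∞_{N,w}`: some power of `Δ` times `p` (viewed in `R'`)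
lies in `I_σ + I_S`. -/
theorem wt_eq_iff_saturated_syndromes_vanish (n m w : ℕ) [NeZero n] (hodd : Odd n) (hm : 0 < m)
    (hdvd : n ∣ 2 ^ m - 1) (hw1 : 1 ≤ w) (hwn : w ≤ n)
    (α : K) (hα : IsPrimitiveRoot α n)
    (Q : Set (ZMod n)) (d t : ℕ)
    (hd : IsLeast {v : ℕ | ∃ c : ZMod n → K,
      isBinary c ∧ (∀ i ∈ Q, ft α c i = 0) ∧ c ≠ 0 ∧ wt c = v} d)
    (ht : t = (d - 1) / 2)
    (hwt : w ≤ t)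
    (e : ZMod n → K) (he : isBinary e) (het : wt e ≤ t) :
    wt e = w ↔
      ∀ p : MvPolynomial Q F2,
        (∃ k : ℕ, Delta n w ^ k *
            MvPolynomial.rename (fun j : Q => (Sum.inr (Sum.inl j.1) : Vars' n w)) p
          ∈ Isig n w + IS n w) →
        MvPolynomial.aeval (fun j : Q => ft α e j.1) p = 0 := by
  constructor
  · rintro hw p ⟨k, hk⟩
    obtain ⟨Z, hinj, hroot, hS⟩ := exists_locators α hα e he hw
    obtain ⟨x, hxS, hx, hΔ⟩ := mem_zeroLocus_of_locators Z hinj hroot (ft α e) hS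
    have h := hx _ hk
    rw [map_mul, map_pow, aeval_rename] at h
    have h' := (mul_eq_zero.1 h).resolve_left (pow_ne_zero k hΔ)
    rw [← h']
    congr 2
    exact funext fun a => (hxS a.1).symm
  · intro h
    obtain ⟨Z, hinj, hroot, hS⟩ := exists_locators_of_saturation_vanish Q _ h
    obtain ⟨e', he', hw', hft⟩ := exists_word α hα Z hinj hroot
    have heq : e - e' = 0 := by
      by_contra hne
      have hmin : d ≤ wt (e - e') := hd.2 ⟨e - e', isBinary_sub he he', fun i hi => by
        rw [ft_sub, hft, sub_eq_zero]
        exact hS ⟨i, hi⟩, hne, rfl⟩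
      have hle := wt_sub_le e e'
      -- `2 * ((d - 1) / 2) < d` because `t ≥ w ≥ 1` excludes `d = 0`.
      omega
    rw [sub_eq_zero.1 heq, hw']
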